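/- The family of liftings (λ⁼ᵖ)_{p ∈ [0,1]} for the finite distribution functor D separates by singletons: for every type X and all d, d' ∈ D X with d ≠ d', there exist x ∈ X and p ∈ [0,1] such that d ∈ λ⁼ᵖ X {x} and d' ∉ λ⁼ᵖ X {x}. -/

import Mathlib

open CategoryTheory
open scoped NNReal Classical

universe u

/-- The finite distribution functor `D : Type u ⥤ Type u`. -/
noncomputable def DistFunctor : Type u ⥤ Type u where
  obj X := { d : X →₀ ℝ≥0 // ∑ x ∈ d.support, d x = 1 }
  map f := ↾fun d => ⟨Finsupp.mapDomain f d.1, by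
    have h : (Finsupp.mapDomain f d.1).sum (fun _ v => v) = d.1.sum (fun _ v => v) :=
      Finsupp.sum_mapDomain_index (fun _ => rfl) (fun _ _ _ => rfl)
    simpa [Finsupp.sum] using h.trans (by simpa [Finsupp.sum] using d.2)⟩
  map_id X := by
    refine ConcreteCategory.hom_ext _ _ fun d => ?_
    exact Subtype.ext (by
      change Finsupp.mapDomain id d.1 = d.1
      exact Finsupp.mapDomain_id)
  map_comp f g := by
    refine ConcreteCategory.hom_ext _ _ fun d => ?_
    exact Subtype.ext (by
      change Finsupp.mapDomain (g ∘ f) d.1 = Finsupp.mapDomain g (Finsupp.mapDomain f d.1)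
      exact Finsupp.mapDomain_comp)

/-- `λ⁼ᵖ`: the set of distributions assigning total probability exactly `p` to `U`. -/
noncomputable def probLifting (p : ℝ≥0) (X : Type u) (U : Set X) :
    Set (DistFunctor.obj X) :=
  { d | ∑ x ∈ d.1.support.filter (· ∈ U), d.1 x = p }

theorem sum_support_filter_mem_coe {α M : Type*} [AddCommMonoid M] (f : α →₀ M) (s : Finset α)
    [DecidablePred (· ∈ (s : Set α))] :
    ∑ x ∈ f.support.filter (· ∈ (s : Set α)), f x = ∑ x ∈ s, f x := by
  refine Finset.sum_subset (fun x hx => (Finset.mem_filter.mp hx).2) fun x hxs hx => ?_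
  have hx_support : x ∉ f.support := fun h => hx (Finset.mem_filter.mpr ⟨h, hxs⟩)
  exact Finsupp.notMem_support_iff.mp hx_support

section

variable {X : Type u} {p : ℝ≥0} {d : DistFunctor.obj X}

theorem mem_probLifting_coe {s : Finset X} :
    d ∈ probLifting p X (s : Set X) ↔ ∑ x ∈ s, d.1 x = p := by
  rw [probLifting, Set.mem_ofPred_eq, sum_support_filter_mem_coe]

theorem mem_probLifting_singleton {x : X} : d ∈ probLifting p X {x} ↔ d.1 x = p := by
  rw [← Finset.coe_singleton, mem_probLifting_coe, Finset.sum_singleton]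

theorem le_one_of_mem_probLifting {U : Set X} (hd : d ∈ probLifting p X U) : p ≤ 1 :=
  calc
    p = ∑ x ∈ d.1.support.filter (· ∈ U), d.1 x := hd.symm
    _ ≤ ∑ x ∈ d.1.support, d.1 x := Finset.sum_le_sum_of_subset (Finset.filter_subset _ _)
    _ = 1 := d.2

end

/-- The family `(λ⁼ᵖ)_{p ∈ [0,1]}` separates by singletons. -/
theorem probLifting_separatesBySingletons (X : Type u)
    (d d' : DistFunctor.obj X) (h : d ≠ d') :
    ∃ (x : X) (p : ℝ≥0), p ∈ Set.Icc (0 : ℝ≥0) 1 ∧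
      d ∈ probLifting p X {x} ∧ d' ∉ probLifting p X {x} := by
  obtain ⟨x, hx⟩ : ∃ x, d.1 x ≠ d'.1 x := Finsupp.ne_iff.mp (Subtype.coe_ne_coe.mpr h)
  have hd : d ∈ probLifting (d.1 x) X {x} := mem_probLifting_singleton.mpr rfl
  have hd' : d' ∉ probLifting (d.1 x) X {x} := fun hmem =>
    hx (mem_probLifting_singleton.mp hmem).symm
  exact ⟨x, d.1 x, ⟨zero_le, le_one_of_mem_probLifting hd⟩, hd, hd'⟩
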